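/- arXiv:math/0403007 — 2 statements merged into one kernel-verified Lean document; each statement's English description precedes it below -/
import Mathlib

section
/- Let n be a positive integer and let a : ℝ³ → ℂ be a smooth compactly supported function. Then, as λ → +∞, ∫₀^∞ ∫_{ℝ²} e^{iλ t r^{2n} v} a(t,r,v) r^{2n−1} dt dv dr = (π/n) λ^{−1} (log λ) a(0,0,0) + O(λ^{−1}). -/
open MeasureTheory

/-!
For fixed `r` the integral over `(t, v)` is a saddle integral of frequency `m = λ r ^ p`. The
`v`-integral is a Fourier transform in `v`; rescaling `t` by `m / 2π`, freezing the slow variable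
`t` at `0` and applying Fourier inversion shows that the saddle integral equals
`(2π / m) a(0, r, 0) + O(m⁻²)`, uniformly in `r`, while it stays bounded as `m → 0`.

The substitution `u = r ^ p` turns `r ^ (p - 1) dr` into `du / p` and the frequency into `λ u`. The
range `u ≤ λ⁻¹` contributes `O(λ⁻¹)` by boundedness. On `λ⁻¹ ≤ u ≤ U` the leading term
`2π a(0, 0, 0) / (λ u)` integrates to `2π a(0, 0, 0) λ⁻¹ log λ + O(λ⁻¹)`, and both errors, `(λ u)⁻²`
and `λ⁻¹ u ^ (1 / p - 1)` (from replacing `a(0, r, 0)` by `a(0, 0, 0)`), integrate to `O(λ⁻¹)`.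
-/

open Set FourierTransform
open scoped Real

section Integral

variable {E : Type*} [NormedAddCommGroup E]

lemma norm_integral_le_of_eq_zero_of_le_abs [NormedSpace ℝ E] {f : ℝ → E} {R C : ℝ} (hR : 0 ≤ R)
    (hsupp : ∀ x, R ≤ |x| → f x = 0) (hC : ∀ x, ‖f x‖ ≤ C) : ‖∫ x, f x‖ ≤ C * (2 * R) := by
  have hset : ∫ x in Icc (-R) R, f x = ∫ x, f x :=
    setIntegral_eq_integral_of_forall_compl_eq_zero fun x hx ↦
      hsupp x (le_of_not_ge fun h ↦ hx (abs_le.mp h))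
  have hvol : volume.real (Icc (-R) R) = 2 * R := by
    rw [Real.volume_real_Icc_of_le (by linarith)]
    ring
  rw [← hset, ← hvol]
  exact norm_setIntegral_le_of_norm_le_const measure_Icc_lt_top fun x _ ↦ hC x

variable [NormedSpace ℂ E]

lemma norm_fourier_le_of_eq_zero_of_le_abs {g : ℝ → E} {R C : ℝ} (hR : 0 ≤ R)
    (hsupp : ∀ v, R ≤ |v| → g v = 0) (hC : ∀ v, ‖g v‖ ≤ C) (w : ℝ) :
    ‖𝓕 g w‖ ≤ C * (2 * R) := by
  rw [Real.fourier_real_eq]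
  refine norm_integral_le_of_eq_zero_of_le_abs hR (fun v hv ↦ ?_) fun v ↦ ?_
  · rw [hsupp v hv, smul_zero]
  · rw [Circle.norm_smul]
    exact hC v

lemma fourier_sub_apply {V : Type*} [NormedAddCommGroup V] [InnerProductSpace ℝ V]
    [MeasurableSpace V] [BorelSpace V] [FiniteDimensional ℝ V] {f g : V → E}
    (hf : Integrable f) (hg : Integrable g) (w : V) :
    𝓕 (fun v ↦ f v - g v) w = 𝓕 f w - 𝓕 g w := by
  simp only [Real.fourier_eq, smul_sub]
  exact integral_sub ((Real.fourierIntegral_convergent_iff w).2 hf)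
    ((Real.fourierIntegral_convergent_iff w).2 hg)

lemma abs_le_norm_two_pi_I_mul (w : ℝ) : |w| ≤ ‖2 * π * Complex.I * w‖ := by
  have hnorm : ‖2 * π * Complex.I * w‖ = 2 * π * |w| := by simp [abs_of_pos Real.pi_pos]
  rw [hnorm]
  nlinarith [Real.pi_gt_three, abs_nonneg w]

lemma integral_fourier_eq_apply_zero [CompleteSpace E] {V : Type*} [NormedAddCommGroup V]
    [InnerProductSpace ℝ V] [MeasurableSpace V] [BorelSpace V] [FiniteDimensional ℝ V] {g : V → E}
    (hg : Continuous g) (hint : Integrable g) (hint_fourier : Integrable (𝓕 g)) :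
    ∫ w, 𝓕 g w = g 0 := by
  have inversion : 𝓕⁻ (𝓕 g) 0 = g 0 := congrFun (hg.fourierInv_fourier_eq hint hint_fourier) 0
  simpa [Real.fourierInv_eq'] using inversion

end Integral

section Fiber

variable {E Y : Type*} [NormedAddCommGroup E] [NormedAddCommGroup Y]

lemma eq_zero_of_le_abs_last {a : ℝ × Y × ℝ → E} {R : ℝ} (hR : ∀ x, R ≤ ‖x‖ → a x = 0)
    (t : ℝ) (y : Y) {v : ℝ} (hv : R ≤ |v|) : a (t, y, v) = 0 :=
  hR _ (hv.trans ((norm_snd_le (y, v)).trans (norm_snd_le (t, y, v))))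

lemma integrable_fiber {a : ℝ × Y × ℝ → E} (ha : Continuous a) (hca : HasCompactSupport a)
    (t : ℝ) (y : Y) : Integrable fun v ↦ a (t, y, v) := by
  have hclosed : Topology.IsClosedEmbedding fun v : ℝ ↦ (t, y, v) :=
    Function.LeftInverse.isClosedEmbedding (f := fun x : ℝ × Y × ℝ ↦ x.2.2) (fun _ ↦ rfl)
      (by fun_prop) (by fun_prop)
  exact (ha.comp hclosed.continuous).integrable_of_hasCompactSupport
    (hca.comp_isClosedEmbedding hclosed)

lemma stronglyMeasurable_fourier_fiber [NormedSpace ℂ E] {a : ℝ × Y × ℝ → E} (ha : Continuous a)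
    {τ : ℝ → ℝ} (hτ : Continuous τ) (y : Y) :
    StronglyMeasurable fun w ↦ 𝓕 (fun v ↦ a (τ w, y, v)) w := by
  simp only [Real.fourier_real_eq_integral_exp_smul]
  have hcont : Continuous fun x : ℝ × ℝ ↦
      Complex.exp (↑(-2 * π * x.2 * x.1) * Complex.I) • a (τ x.1, y, x.2) := by fun_prop
  exact hcont.stronglyMeasurable.integral_prod_right'

lemma exists_norm_fourier_fiber_le [NormedSpace ℂ E] {a : ℝ × Y × ℝ → E} (ha : Continuous a)
    (hca : HasCompactSupport a) :
    ∃ C, 0 ≤ C ∧ ∀ t y w, ‖𝓕 (fun v ↦ a (t, y, v)) w‖ ≤ C := by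
  obtain ⟨R, hRpos, hR⟩ := hca.exists_pos_le_norm
  obtain ⟨B, hB⟩ := hca.exists_bound_of_continuous ha
  have hB0 : 0 ≤ B := (norm_nonneg _).trans (hB 0)
  exact ⟨B * (2 * R), by positivity, fun t y w ↦ norm_fourier_le_of_eq_zero_of_le_abs hRpos.le
    (fun v ↦ eq_zero_of_le_abs_last hR t y) (fun v ↦ hB _) w⟩

variable [NormedSpace ℝ Y]

/-- The partial derivative `∂a/∂v` of `a(t, y, v)`, encoded as the directional derivative along
`(0, 0, 1)`. Its iterates give the decay in `w` of the Fourier transforms of `a(t, y, ·)`. -/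
noncomputable def fiberDeriv [NormedSpace ℝ E] (a : ℝ × Y × ℝ → E) (x : ℝ × Y × ℝ) : E :=
  fderiv ℝ a x (0, 0, 1)

section FiberDeriv

variable [NormedSpace ℝ E] {a : ℝ × Y × ℝ → E}

lemma deriv_fiber (ha : Differentiable ℝ a) (t : ℝ) (y : Y) :
    deriv (fun v ↦ a (t, y, v)) = fun v ↦ fiberDeriv a (t, y, v) := by
  ext v
  have hline : HasDerivAt (fun v : ℝ ↦ (t, y, v)) ((0 : ℝ), (0 : Y), (1 : ℝ)) v :=
    (hasDerivAt_const v t).prodMk ((hasDerivAt_const v y).prodMk (hasDerivAt_id v))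
  exact ((ha (t, y, v)).hasFDerivAt.comp_hasDerivAt v hline).deriv

lemma contDiff_fiberDeriv {k : ℕ} (ha : ContDiff ℝ (k + 1 : ℕ) a) : ContDiff ℝ k (fiberDeriv a) :=
  (ha.fderiv_right (by norm_cast)).clm_apply contDiff_const

lemma contDiff_iterate_fiberDeriv {j k : ℕ} (ha : ContDiff ℝ (j + k : ℕ) a) :
    ContDiff ℝ j (fiberDeriv^[k] a) := by
  induction k generalizing a with
  | zero => exact ha
  | succ k ih => exact ih (contDiff_fiberDeriv ha)

lemma hasCompactSupport_fiberDeriv (hca : HasCompactSupport a) :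
    HasCompactSupport (fiberDeriv a) :=
  hca.fderiv_apply (𝕜 := ℝ) _

lemma hasCompactSupport_iterate_fiberDeriv (k : ℕ) (hca : HasCompactSupport a) :
    HasCompactSupport (fiberDeriv^[k] a) := by
  induction k generalizing a with
  | zero => exact hca
  | succ _ ih => exact ih (hasCompactSupport_fiberDeriv hca)

end FiberDeriv

variable [NormedSpace ℂ E] {a : ℝ × Y × ℝ → E}

lemma fourier_iterate_fiberDeriv {k : ℕ} (ha : ContDiff ℝ k a) (hca : HasCompactSupport a)
    (t : ℝ) (y : Y) (w : ℝ) :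
    𝓕 (fun v ↦ fiberDeriv^[k] a (t, y, v)) w =
      (2 * π * Complex.I * w) ^ k • 𝓕 (fun v ↦ a (t, y, v)) w := by
  induction k generalizing a with
  | zero => simp
  | succ k ih =>
    have ha' : ContDiff ℝ k (fiberDeriv a) := contDiff_fiberDeriv ha
    have hca' : HasCompactSupport (fiberDeriv a) := hasCompactSupport_fiberDeriv hca
    have hdiff : Differentiable ℝ a := ha.differentiable (by simp)
    have hint := integrable_fiber ha.continuous hca t y
    have hint' := integrable_fiber ha'.continuous hca' t y
    rw [← deriv_fiber hdiff] at hint'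
    rw [Function.iterate_succ_apply, ih ha' hca', ← deriv_fiber hdiff,
      Real.fourier_deriv hint (by fun_prop) hint', smul_smul, pow_succ]

lemma exists_norm_fourier_fiber_sub_le (ha : ContDiff ℝ 1 a) (hca : HasCompactSupport a) :
    ∃ C, 0 ≤ C ∧ ∀ t₁ t₂ y w,
      ‖𝓕 (fun v ↦ a (t₁, y, v)) w - 𝓕 (fun v ↦ a (t₂, y, v)) w‖ ≤ C * |t₁ - t₂| := by
  obtain ⟨R, hRpos, hR⟩ := hca.exists_pos_le_norm
  obtain ⟨L, hL⟩ := ContDiff.lipschitzWith_of_hasCompactSupport hca ha one_ne_zero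
  refine ⟨L * (2 * R), by positivity, fun t₁ t₂ y w ↦ ?_⟩
  rw [← fourier_sub_apply (integrable_fiber ha.continuous hca t₁ y)
    (integrable_fiber ha.continuous hca t₂ y), mul_right_comm]
  refine norm_fourier_le_of_eq_zero_of_le_abs hRpos.le (fun v hv ↦ ?_) (fun v ↦ ?_) w
  · rw [eq_zero_of_le_abs_last hR t₁ y hv, eq_zero_of_le_abs_last hR t₂ y hv, sub_zero]
  · simpa [Prod.norm_def] using hL.norm_sub_le (t₁, y, v) (t₂, y, v)

lemma exists_pow_mul_norm_fourier_fiber_le {k : ℕ} (ha : ContDiff ℝ k a)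
    (hca : HasCompactSupport a) :
    ∃ C, 0 ≤ C ∧ ∀ t y w, |w| ^ k * ‖𝓕 (fun v ↦ a (t, y, v)) w‖ ≤ C := by
  obtain ⟨C, hC0, hC⟩ := exists_norm_fourier_fiber_le
    (contDiff_iterate_fiberDeriv (j := 0) (k := k) (by simpa using ha)).continuous
    (hasCompactSupport_iterate_fiberDeriv k hca)
  refine ⟨C, hC0, fun t y w ↦ le_trans ?_ (hC t y w)⟩
  rw [fourier_iterate_fiberDeriv ha hca, norm_smul, norm_pow]
  gcongr
  exact abs_le_norm_two_pi_I_mul w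

lemma exists_pow_mul_norm_fourier_fiber_sub_le {k : ℕ} (ha : ContDiff ℝ (1 + k : ℕ) a)
    (hca : HasCompactSupport a) :
    ∃ C, 0 ≤ C ∧ ∀ t₁ t₂ y w,
      |w| ^ k * ‖𝓕 (fun v ↦ a (t₁, y, v)) w - 𝓕 (fun v ↦ a (t₂, y, v)) w‖ ≤ C * |t₁ - t₂| := by
  have hak : ContDiff ℝ k a := ha.of_le (by norm_cast; omega)
  obtain ⟨C, hC0, hC⟩ := exists_norm_fourier_fiber_sub_le
    (mod_cast contDiff_iterate_fiberDeriv ha) (hasCompactSupport_iterate_fiberDeriv k hca)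
  refine ⟨C, hC0, fun t₁ t₂ y w ↦ le_trans ?_ (hC t₁ t₂ y w)⟩
  rw [fourier_iterate_fiberDeriv hak hca, fourier_iterate_fiberDeriv hak hca, ← smul_sub,
    norm_smul, norm_pow]
  gcongr
  exact abs_le_norm_two_pi_I_mul w

lemma exists_norm_fourier_fiber_le_inv_one_add_sq (ha : ContDiff ℝ 2 a)
    (hca : HasCompactSupport a) :
    ∃ C, 0 ≤ C ∧ ∀ t y w, ‖𝓕 (fun v ↦ a (t, y, v)) w‖ ≤ C * (1 + w ^ 2)⁻¹ := by
  obtain ⟨C₀, hC₀, h₀⟩ := exists_norm_fourier_fiber_le ha.continuous hca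
  obtain ⟨C₂, hC₂, h₂⟩ := exists_pow_mul_norm_fourier_fiber_le (k := 2) ha hca
  refine ⟨C₀ + C₂, by positivity, fun t y w ↦ ?_⟩
  rw [← div_eq_mul_inv, le_div_iff₀ (by positivity)]
  linarith [h₀ t y w, sq_abs w ▸ h₂ t y w]

-- The increment `κ * w` costs one power of `w`, which the third derivative in `v` pays for.
lemma exists_norm_fourier_fiber_mul_sub_le_inv_one_add_sq (ha : ContDiff ℝ 4 a)
    (hca : HasCompactSupport a) :
    ∃ C, 0 ≤ C ∧ ∀ κ y w, ‖𝓕 (fun v ↦ a (κ * w, y, v)) w - 𝓕 (fun v ↦ a (0, y, v)) w‖ ≤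
      C * |κ| * (1 + w ^ 2)⁻¹ := by
  obtain ⟨C₁, hC₁, h₁⟩ := exists_pow_mul_norm_fourier_fiber_sub_le (k := 1)
    (ha.of_le (by norm_num)) hca
  obtain ⟨C₃, hC₃, h₃⟩ := exists_pow_mul_norm_fourier_fiber_sub_le (k := 3) ha hca
  refine ⟨C₁ + C₃, by positivity, fun κ y w ↦ ?_⟩
  specialize h₁ (κ * w) 0 y w
  specialize h₃ (κ * w) 0 y w
  rw [sub_zero, abs_mul] at h₁ h₃
  rcases eq_or_ne w 0 with rfl | hw
  · simp only [mul_zero, sub_self, norm_zero]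
    positivity
  · rw [← div_eq_mul_inv, le_div_iff₀ (by positivity)]
    refine le_of_mul_le_mul_left ?_ (abs_pos.2 hw)
    rw [← sq_abs w]
    linarith

lemma integrable_fourier_fiber (ha : ContDiff ℝ 2 a) (hca : HasCompactSupport a) {τ : ℝ → ℝ}
    (hτ : Continuous τ) (y : Y) : Integrable fun w ↦ 𝓕 (fun v ↦ a (τ w, y, v)) w := by
  obtain ⟨C, -, hC⟩ := exists_norm_fourier_fiber_le_inv_one_add_sq ha hca
  exact (integrable_inv_one_add_sq.const_mul C).mono'
    (stronglyMeasurable_fourier_fiber ha.continuous hτ y).aestronglyMeasurable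
    (.of_forall fun w ↦ hC (τ w) y w)

end Fiber

section SaddleIntegral

variable {E Y : Type*} [NormedAddCommGroup E] [NormedSpace ℂ E]

/-- The oscillatory integral `∫∫ e^{imtv} a(t, y, v) dv dt` of frequency `m` and parameter `y`,
whose phase has a saddle at `t = v = 0`. -/
noncomputable def saddleIntegral (a : ℝ × Y × ℝ → E) (m : ℝ) (y : Y) : E :=
  ∫ t : ℝ, ∫ v : ℝ, Complex.exp (Complex.I * ((m * t * v : ℝ) : ℂ)) • a (t, y, v)

variable {a : ℝ × Y × ℝ → E}

lemma integral_exp_smul_fiber_eq_fourier (m t : ℝ) (y : Y) :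
    ∫ v : ℝ, Complex.exp (Complex.I * ((m * t * v : ℝ) : ℂ)) • a (t, y, v) =
      𝓕 (fun v ↦ a (t, y, v)) (-(m / (2 * π)) * t) := by
  rw [Real.fourier_real_eq_integral_exp_smul]
  congr! 4 with v
  rw [mul_comm]
  congr 2
  field_simp

lemma saddleIntegral_eq_smul_integral_fourier {m : ℝ} (hm : 0 < m) (y : Y) :
    saddleIntegral a m y =
      (2 * π / m) • ∫ w, 𝓕 (fun v ↦ a (-(2 * π / m) * w, y, v)) w := by
  have hsub := Measure.integral_comp_mul_left
    (fun w ↦ 𝓕 (fun v ↦ a (-(2 * π / m) * w, y, v)) w) (-(m / (2 * π)))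
  have habs : |(-(m / (2 * π)))⁻¹| = 2 * π / m := by
    rw [inv_neg, abs_neg, inv_div, abs_of_pos (by positivity)]
  rw [habs] at hsub
  rw [← hsub, saddleIntegral]
  congr! 2 with t
  rw [integral_exp_smul_fiber_eq_fourier]
  congr! 4
  field_simp

variable [NormedAddCommGroup Y]

lemma exists_norm_saddleIntegral_le (ha : Continuous a) (hca : HasCompactSupport a) :
    ∃ K, ∀ m y, ‖saddleIntegral a m y‖ ≤ K := by
  obtain ⟨R, hRpos, hR⟩ := hca.exists_pos_le_norm
  obtain ⟨C, -, hC⟩ := exists_norm_fourier_fiber_le ha hca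
  refine ⟨C * (2 * R), fun m y ↦
    norm_integral_le_of_eq_zero_of_le_abs hRpos.le (fun t ht ↦ ?_) fun t ↦ ?_⟩
  · simp [hR _ (ht.trans (norm_fst_le (t, y, _)))]
  · rw [integral_exp_smul_fiber_eq_fourier]
    exact hC _ _ _

lemma saddleIntegral_eq_zero_of_le_norm {R : ℝ} (hR : ∀ x, R ≤ ‖x‖ → a x = 0) (m : ℝ) {y : Y}
    (hy : R ≤ ‖y‖) : saddleIntegral a m y = 0 := by
  have hzero (t v : ℝ) : a (t, y, v) = 0 :=
    hR _ (hy.trans ((norm_fst_le (y, v)).trans (norm_snd_le (t, y, v))))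
  simp [saddleIntegral, hzero]

lemma stronglyMeasurable_saddleIntegral (ha : Continuous a) {μ : ℝ → ℝ} {η : ℝ → Y}
    (hμ : Continuous μ) (hη : Continuous η) :
    StronglyMeasurable fun u ↦ saddleIntegral a (μ u) (η u) := by
  have hcont : Continuous fun x : (ℝ × ℝ) × ℝ ↦
      Complex.exp (Complex.I * ((μ x.1.1 * x.1.2 * x.2 : ℝ) : ℂ)) • a (x.1.2, η x.1.1, x.2) := by
    fun_prop
  exact hcont.stronglyMeasurable.integral_prod_right'.integral_prod_right'

variable [NormedSpace ℝ Y]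

lemma exists_norm_saddleIntegral_sub_le [CompleteSpace E] (ha : ContDiff ℝ 4 a)
    (hca : HasCompactSupport a) :
    ∃ C, 0 ≤ C ∧ ∀ m, 0 < m → ∀ y,
      ‖saddleIntegral a m y - (2 * π / m) • a (0, y, 0)‖ ≤ C * (m ^ 2)⁻¹ := by
  obtain ⟨C, hC0, hC⟩ := exists_norm_fourier_fiber_mul_sub_le_inv_one_add_sq ha hca
  refine ⟨C * (2 * π) ^ 2 * π, by positivity, fun m hm y ↦ ?_⟩
  have ha2 : ContDiff ℝ 2 a := ha.of_le (by norm_num)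
  have hint := integrable_fourier_fiber ha2 hca (τ := fun w ↦ -(2 * π / m) * w) (by fun_prop) y
  have hint₀ := integrable_fourier_fiber ha2 hca (τ := fun _ ↦ 0) continuous_const y
  have inversion : ∫ w, 𝓕 (fun v ↦ a (0, y, v)) w = a (0, y, 0) :=
    integral_fourier_eq_apply_zero (g := fun v ↦ a (0, y, v)) (by fun_prop)
      (integrable_fiber ha.continuous hca 0 y) hint₀
  have herror : ‖∫ w, (𝓕 (fun v ↦ a (-(2 * π / m) * w, y, v)) w - 𝓕 (fun v ↦ a (0, y, v)) w)‖ ≤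
      C * (2 * π / m) * π := by
    have hbound := norm_integral_le_of_norm_le
      (integrable_inv_one_add_sq.const_mul (C * |(-(2 * π / m))|))
      (.of_forall fun w ↦ hC (-(2 * π / m)) y w)
    rwa [integral_const_mul, integral_univ_inv_one_add_sq, abs_neg, abs_of_pos (by positivity)]
      at hbound
  calc ‖saddleIntegral a m y - (2 * π / m) • a (0, y, 0)‖
      = 2 * π / m * ‖∫ w, (𝓕 (fun v ↦ a (-(2 * π / m) * w, y, v)) w -
          𝓕 (fun v ↦ a (0, y, v)) w)‖ := by
        rw [saddleIntegral_eq_smul_integral_fourier hm, ← inversion, ← smul_sub,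
          ← integral_sub hint hint₀, norm_smul, Real.norm_of_nonneg (by positivity)]
    _ ≤ 2 * π / m * (C * (2 * π / m) * π) := by gcongr
    _ = C * (2 * π) ^ 2 * π * (m ^ 2)⁻¹ := by field_simp

end SaddleIntegral

section LogarithmicIntegral

lemma integral_inv_sq_le {b U : ℝ} (hb : 0 < b) (hbU : b ≤ U) :
    ∫ u in b..U, (u ^ 2)⁻¹ ≤ b⁻¹ := by
  have hzero : (0 : ℝ) ∉ uIcc b U := notMem_uIcc_of_lt hb (hb.trans_le hbU)
  have heval : ∫ u in b..U, u ^ (-2 : ℤ) = b⁻¹ - U⁻¹ := by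
    have hexp : (-2 : ℤ) + 1 = -1 := by norm_num
    rw [integral_zpow (Or.inr ⟨by norm_num, hzero⟩), hexp, zpow_neg_one, zpow_neg_one]
    push_cast
    ring
  have hUinv : 0 < U⁻¹ := inv_pos.2 (hb.trans_le hbU)
  calc ∫ u in b..U, (u ^ 2)⁻¹ = b⁻¹ - U⁻¹ := by simpa [zpow_neg] using heval
    _ ≤ b⁻¹ := by linarith

lemma integral_rpow_sub_one_le {b U α : ℝ} (hb : 0 ≤ b) (hα : 0 < α) :
    ∫ u in b..U, u ^ (α - 1) ≤ U ^ α / α := by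
  rw [integral_rpow (Or.inl (by linarith)), sub_add_cancel]
  gcongr
  linarith [Real.rpow_nonneg hb α]

variable {E : Type*} [NormedAddCommGroup E] [NormedSpace ℝ E] {G : ℝ → E} {c : E}
  {lam U K A B α : ℝ}

lemma integral_inv_mul_smul [CompleteSpace E] (hlam : 0 < lam) (hU : 0 < U) :
    ∫ u in lam⁻¹..U, (lam * u)⁻¹ • c = (lam⁻¹ * (Real.log lam + Real.log U)) • c := by
  have hlog : Real.log (U / lam⁻¹) = Real.log lam + Real.log U := by
    rw [div_inv_eq_mul, mul_comm, Real.log_mul hlam.ne' hU.ne']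
  rw [intervalIntegral.integral_smul_const]
  simp only [mul_inv]
  rw [intervalIntegral.integral_const_mul, integral_inv_of_pos (inv_pos.2 hlam) hU, hlog]

lemma norm_integral_sub_inv_smul_le (hlam : 0 < lam) (hU : lam⁻¹ ≤ U) (hα : 0 < α) (hA : 0 ≤ A)
    (hB : 0 ≤ B)
    (hG : ∀ u, 0 < u →
      ‖G u - (lam * u)⁻¹ • c‖ ≤ A * ((lam * u) ^ 2)⁻¹ + B * (lam⁻¹ * u ^ (α - 1))) :
    ‖∫ u in lam⁻¹..U, (G u - (lam * u)⁻¹ • c)‖ ≤ (A + B * (U ^ α / α)) * lam⁻¹ := by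
  have hε : 0 < lam⁻¹ := inv_pos.2 hlam
  have hinv_sq : IntervalIntegrable (fun u : ℝ ↦ (u ^ 2)⁻¹) volume lam⁻¹ U :=
    intervalIntegral.intervalIntegrable_inv (fun u hu ↦ pow_ne_zero 2 fun h ↦
      notMem_uIcc_of_lt hε (hε.trans_le hU) (h ▸ hu)) (by fun_prop)
  have hrpow : IntervalIntegrable (fun u : ℝ ↦ u ^ (α - 1)) volume lam⁻¹ U :=
    intervalIntegral.intervalIntegrable_rpow' (by linarith)
  have hbound := intervalIntegral.norm_integral_le_of_norm_le hU
    (.of_forall fun u hu ↦ (hG u (hε.trans hu.1)).trans_eq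
      (by ring : _ = A * lam⁻¹ ^ 2 * (u ^ 2)⁻¹ + B * lam⁻¹ * u ^ (α - 1)))
    ((hinv_sq.const_mul (A * lam⁻¹ ^ 2)).add (hrpow.const_mul (B * lam⁻¹)))
  rw [intervalIntegral.integral_add (hinv_sq.const_mul _) (hrpow.const_mul _),
    intervalIntegral.integral_const_mul, intervalIntegral.integral_const_mul] at hbound
  calc _ ≤ A * lam⁻¹ ^ 2 * (∫ u in lam⁻¹..U, (u ^ 2)⁻¹) +
        B * lam⁻¹ * ∫ u in lam⁻¹..U, u ^ (α - 1) := hbound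
    _ ≤ A * lam⁻¹ ^ 2 * lam⁻¹⁻¹ + B * lam⁻¹ * (U ^ α / α) := by
        gcongr
        · exact integral_inv_sq_le hε hU
        · exact integral_rpow_sub_one_le hε.le hα
    _ = (A + B * (U ^ α / α)) * lam⁻¹ := by field_simp

lemma integral_Ioi_sub_log_smul_eq [CompleteSpace E] (hlam : 0 < lam) (hU : 0 < U)
    (hint : ∀ b d, IntervalIntegrable G volume b d) (hsupp : ∀ u, U < u → G u = 0) :
    (∫ u in Ioi 0, G u) - (lam⁻¹ * Real.log lam) • c =
      (∫ u in (0 : ℝ)..lam⁻¹, G u) + (∫ u in lam⁻¹..U, (G u - (lam * u)⁻¹ • c)) +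
        (lam⁻¹ * Real.log U) • c := by
  have hmain : IntervalIntegrable (fun u ↦ (lam * u)⁻¹ • c) volume lam⁻¹ U := by
    refine ContinuousOn.intervalIntegrable fun u hu ↦ ContinuousAt.continuousWithinAt ?_
    have hu0 : lam * u ≠ 0 := mul_ne_zero hlam.ne' fun h ↦
      notMem_uIcc_of_lt (inv_pos.2 hlam) hU (h ▸ hu)
    fun_prop (disch := assumption)
  have htrunc : ∫ u in Ioi 0, G u = ∫ u in (0 : ℝ)..U, G u := by
    rw [intervalIntegral.integral_of_le hU.le]
    exact setIntegral_eq_of_subset_of_forall_sdiff_eq_zero measurableSet_Ioi Ioc_subset_Ioi_self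
      fun u hu ↦ hsupp u (not_le.1 fun h ↦ hu.2 ⟨hu.1, h⟩)
  rw [htrunc, ← intervalIntegral.integral_add_adjacent_intervals (hint 0 lam⁻¹) (hint lam⁻¹ U),
    intervalIntegral.integral_sub (hint _ _) hmain, integral_inv_mul_smul hlam hU]
  module

lemma norm_integral_Ioi_sub_log_smul_le [CompleteSpace E] (hlam : 1 ≤ lam) (hU : 1 ≤ U)
    (hα : 0 < α) (hA : 0 ≤ A) (hB : 0 ≤ B) (hmeas : StronglyMeasurable G) (hK : ∀ u, ‖G u‖ ≤ K)
    (hsupp : ∀ u, U < u → G u = 0)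
    (hG : ∀ u, 0 < u →
      ‖G u - (lam * u)⁻¹ • c‖ ≤ A * ((lam * u) ^ 2)⁻¹ + B * (lam⁻¹ * u ^ (α - 1))) :
    ‖(∫ u in Ioi 0, G u) - (lam⁻¹ * Real.log lam) • c‖ ≤
      (K + (A + B * (U ^ α / α)) + Real.log U * ‖c‖) * lam⁻¹ := by
  have hlam0 : 0 < lam := one_pos.trans_le hlam
  have hlamU : lam⁻¹ ≤ U := (inv_le_one_of_one_le₀ hlam).trans hU
  have hint (b d : ℝ) : IntervalIntegrable G volume b d :=
    (intervalIntegrable_const (c := K)).mono_fun' hmeas.aestronglyMeasurable (.of_forall hK)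
  have hnear : ‖∫ u in (0 : ℝ)..lam⁻¹, G u‖ ≤ K * lam⁻¹ := by
    simpa [abs_of_pos hlam0] using intervalIntegral.norm_integral_le_of_norm_le_const
      (a := 0) (b := lam⁻¹) fun u _ ↦ hK u
  have hfar := norm_integral_sub_inv_smul_le hlam0 hlamU hα hA hB hG
  have hconst : ‖(lam⁻¹ * Real.log U) • c‖ = lam⁻¹ * Real.log U * ‖c‖ := by
    rw [norm_smul, Real.norm_of_nonneg (mul_nonneg (inv_pos.2 hlam0).le (Real.log_nonneg hU))]
  rw [integral_Ioi_sub_log_smul_eq hlam0 (one_pos.trans_le hU) hint hsupp]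
  linarith [norm_add₃_le (a := ∫ u in (0 : ℝ)..lam⁻¹, G u)
    (b := ∫ u in lam⁻¹..U, (G u - (lam * u)⁻¹ • c)) (c := (lam⁻¹ * Real.log U) • c)]

end LogarithmicIntegral

section Asymptotics

variable {E : Type*} [NormedAddCommGroup E] [NormedSpace ℂ E] {a : ℝ × ℝ × ℝ → E} {p : ℝ}

lemma integral_rpow_smul_eq_integral_saddleIntegral (hp : 0 < p) (lam : ℝ) :
    ∫ r in Ioi (0 : ℝ), ∫ t : ℝ, ∫ v : ℝ,
        (r ^ (p - 1)) • Complex.exp (Complex.I * ((lam * t * r ^ p * v : ℝ) : ℂ)) • a (t, r, v) =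
      p⁻¹ • ∫ u in Ioi (0 : ℝ), saddleIntegral a (lam * u) (u ^ p⁻¹) := by
  rw [← integral_comp_rpow_Ioi_of_pos (g := fun u ↦ saddleIntegral a (lam * u) (u ^ p⁻¹)) hp,
    ← integral_smul]
  refine setIntegral_congr_fun measurableSet_Ioi fun r hr ↦ ?_
  simp only [saddleIntegral, integral_smul, smul_smul, inv_mul_cancel_left₀ hp.ne',
    Real.rpow_rpow_inv (le_of_lt hr) hp.ne', mul_right_comm lam (r ^ p)]

lemma exists_norm_saddleIntegral_rpow_sub_le [CompleteSpace E] (ha : ContDiff ℝ 4 a)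
    (hca : HasCompactSupport a) (α : ℝ) :
    ∃ A B, 0 ≤ A ∧ 0 ≤ B ∧ ∀ lam u, 0 < lam → 0 < u →
      ‖saddleIntegral a (lam * u) (u ^ α) - (lam * u)⁻¹ • (2 * π) • a (0, 0, 0)‖ ≤
        A * ((lam * u) ^ 2)⁻¹ + B * (lam⁻¹ * u ^ (α - 1)) := by
  obtain ⟨A, hA, hsaddle⟩ := exists_norm_saddleIntegral_sub_le ha hca
  obtain ⟨L, hL⟩ := ContDiff.lipschitzWith_of_hasCompactSupport hca ha (by norm_num)
  refine ⟨A, 2 * π * L, hA, by positivity, fun lam u hlam hu ↦ ?_⟩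
  have hm : 0 < lam * u := mul_pos hlam hu
  have hlip : ‖a (0, u ^ α, 0) - a (0, 0, 0)‖ ≤ L * u ^ α := by
    have hnorm : ‖((0 : ℝ), u ^ α, (0 : ℝ)) - (0, 0, 0)‖ = u ^ α := by
      simp [Prod.norm_def, (Real.rpow_pos_of_pos hu α).le, abs_of_pos (Real.rpow_pos_of_pos hu α)]
    have h := hL.norm_sub_le (0, u ^ α, 0) (0, 0, 0)
    rwa [hnorm] at h
  have hsplit : saddleIntegral a (lam * u) (u ^ α) - (lam * u)⁻¹ • (2 * π) • a (0, 0, 0) =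
      (saddleIntegral a (lam * u) (u ^ α) - (2 * π / (lam * u)) • a (0, u ^ α, 0)) +
        (2 * π / (lam * u)) • (a (0, u ^ α, 0) - a (0, 0, 0)) := by
    module
  have hfreeze : ‖(2 * π / (lam * u)) • (a (0, u ^ α, 0) - a (0, 0, 0))‖ ≤
      2 * π * L * (lam⁻¹ * u ^ (α - 1)) := by
    rw [norm_smul, Real.norm_of_nonneg (by positivity)]
    calc 2 * π / (lam * u) * ‖a (0, u ^ α, 0) - a (0, 0, 0)‖
        ≤ 2 * π / (lam * u) * (L * u ^ α) := by gcongr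
      _ = 2 * π * L * (lam⁻¹ * u ^ (α - 1)) := by
          rw [Real.rpow_sub_one hu.ne']
          field_simp
  rw [hsplit]
  exact (norm_add_le _ _).trans (add_le_add (hsaddle _ hm _) hfreeze)

theorem stmt_1_general [CompleteSpace E] (hp : 0 < p) (ha : ContDiff ℝ 4 a)
    (hca : HasCompactSupport a) :
    ∃ C Λ : ℝ, ∀ lam : ℝ, Λ ≤ lam →
      ‖(∫ r in Ioi (0 : ℝ), ∫ t : ℝ, ∫ v : ℝ,
          (r ^ (p - 1)) • Complex.exp (Complex.I * ((lam * t * r ^ p * v : ℝ) : ℂ)) • a (t, r, v))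
        - (2 * π / p * lam⁻¹ * Real.log lam) • a (0, 0, 0)‖ ≤ C * lam⁻¹ := by
  obtain ⟨R, hRpos, hR⟩ := hca.exists_pos_le_norm
  obtain ⟨K, hK⟩ := exists_norm_saddleIntegral_le ha.continuous hca
  obtain ⟨A, B, hA, hB, hAB⟩ := exists_norm_saddleIntegral_rpow_sub_le ha hca p⁻¹
  obtain ⟨U, hU, hRU⟩ : ∃ U, 1 ≤ U ∧ R ^ p ≤ U := ⟨_, le_max_left 1 _, le_max_right _ _⟩
  have hsupp (lam u : ℝ) (hu : U < u) : saddleIntegral a (lam * u) (u ^ p⁻¹) = 0 :=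
    saddleIntegral_eq_zero_of_le_norm hR _ <| (Real.le_norm_self _).trans' <|
      (Real.le_rpow_inv_iff_of_pos hRpos.le (by linarith) hp).2 (hRU.trans hu.le)
  refine ⟨p⁻¹ * (K + (A + B * (U ^ p⁻¹ / p⁻¹)) + Real.log U * ‖(2 * π) • a (0, 0, 0)‖), 1,
    fun lam hlam ↦ ?_⟩
  have hmeas : StronglyMeasurable fun u ↦ saddleIntegral a (lam * u) (u ^ p⁻¹) :=
    stronglyMeasurable_saddleIntegral ha.continuous (by fun_prop)
      (Real.continuous_rpow_const (inv_nonneg.2 hp.le))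
  have hlog := norm_integral_Ioi_sub_log_smul_le hlam hU (inv_pos.2 hp) hA hB
    hmeas (fun u ↦ hK _ _) (hsupp lam) (fun u ↦ hAB lam u (by linarith))
  have hscale : (2 * π / p * lam⁻¹ * Real.log lam) • a (0, 0, 0) =
      p⁻¹ • (lam⁻¹ * Real.log lam) • (2 * π) • a (0, 0, 0) := by
    module
  rw [integral_rpow_smul_eq_integral_saddleIntegral hp, hscale, ← smul_sub, norm_smul,
    Real.norm_of_nonneg (inv_nonneg.2 hp.le), mul_assoc]
  gcongr

end Asymptotics

/-- For `n ≥ 1` and `a` smooth compactly supported on `ℝ³`,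
`∫₀^∞ ∫_{ℝ²} e^{iλ t r^{2n} v} a(t,r,v) r^{2n−1} dt dv dr
  = (π/n) λ^{−1} (log λ) a(0,0,0) + O(λ^{−1})` as `λ → +∞`. -/
theorem stmt_1 (n : ℕ) (hn : 0 < n)
    (a : ℝ × ℝ × ℝ → ℂ) (ha : ContDiff ℝ (⊤ : ℕ∞) a) (hca : HasCompactSupport a) :
    ∃ C Λ : ℝ, ∀ lam : ℝ, Λ ≤ lam →
      ‖(∫ r in Set.Ioi (0:ℝ), ∫ t : ℝ, ∫ v : ℝ,
            Complex.exp (Complex.I * ((lam * t * r ^ (2 * n) * v : ℝ) : ℂ)) * a (t, r, v)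
              * (r : ℂ) ^ (2 * n - 1))
        - ((Real.pi / (n : ℝ) * lam⁻¹ * Real.log lam : ℝ) : ℂ) * a (0, 0, 0)‖
      ≤ C * lam⁻¹ := by
  have hp : 0 < ((2 * n : ℕ) : ℝ) := by positivity
  have hweight (r : ℝ) : r ^ (((2 * n : ℕ) : ℝ) - 1) = r ^ (2 * n - 1) := by
    rw [← Nat.cast_pred (by omega), Real.rpow_natCast]
  have hcoef : 2 * π / ((2 * n : ℕ) : ℝ) = π / n := by
    push_cast
    exact mul_div_mul_left _ _ two_ne_zero
  simpa only [Real.rpow_natCast, hweight, hcoef, Complex.real_smul, smul_eq_mul,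
    Complex.ofReal_pow, mul_comm ((_ : ℂ) ^ (2 * n - 1))] using
    stmt_1_general hp (ha.of_le (by norm_cast)) hca
end

section
/- Let k and n be positive integers with k > 2n, and let Ã : ℝ² → ℂ be a smooth compactly supported function. Set a(s,r) = r^{2n−1} Ã(s,r). Then, as λ → +∞, ∫₀^∞ ∫_ℝ e^{iλ s rᵏ} a(s,r) ds dr = λ^{−2n/k} (Γ(2n/k)/k) ∫_ℝ |s|^{−2n/k} exp(i π (n/k) sign(s)) Ã(s,0) ds + O(λ^{−(2n+1)/k}). -/
open MeasureTheory

/-!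
For fixed `r` the inner integral is the Fourier transform of `Ã(·, r)` at frequency `λ rᵏ`, so the
double integral is a Mellin transform in `r` at the exponent `2n`. Freezing the amplitude at `r = 0`
and rescaling `r` produces the power `λ^{-2n/k}` times the Mellin transform of a single Fourier
transform, which is computed by inserting a factor `e^{-εu}`, applying Fubini and the Gamma integral
`∫₀^∞ u^{α-1} e^{-zu} du = Γ(α) z^{-α}`, and letting `ε → 0`; the phase `e^{±iπn/k}` is that of
`(∓i)^{-2n/k}`. Freezing the amplitude changes the Fourier transform at frequency `t` by at most
`C r (1 + |t|^N)⁻¹`: the Lipschitz bound gains one power of `r`, and the same rescaling turns it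
into a factor `λ^{-1/k}`.
-/

section

open Complex Set Filter Topology
open scoped ContDiff FourierTransform

variable {E : Type*} [NormedAddCommGroup E] [NormedSpace ℂ E]

section Mellin

variable {f : ℝ → E} {g : ℝ → ℝ} {s : ℂ}

theorem mellin_comp_mul_rpow (f : ℝ → E) (s : ℂ) (b : ℝ) {c : ℝ} (hc : 0 < c) :
    mellin (fun t => f (c * t ^ b)) s = |b|⁻¹ • (c : ℂ) ^ (-(s / b)) • mellin f (s / b) := by
  rw [mellin_comp_rpow (fun t => f (c * t)) s b, mellin_comp_mul_left f _ hc]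

theorem mellinConvergent_comp_mul_rpow_iff {b c : ℝ} (hb : b ≠ 0) (hc : 0 < c) :
    MellinConvergent (fun t => f (c * t ^ b)) s ↔ MellinConvergent f (s / b) :=
  (MellinConvergent.comp_rpow (f := fun t => f (c * t)) hb).trans
    (MellinConvergent.comp_mul_left hc)

theorem cpow_sub_one_smul_ofReal {σ t : ℝ} (ht : 0 ≤ t) (x : ℝ) :
    (t : ℂ) ^ ((σ : ℂ) - 1) • (x : ℂ) = ((t ^ (σ - 1) * x : ℝ) : ℂ) := by
  rw [smul_eq_mul, ofReal_mul, ofReal_cpow ht, ofReal_sub, ofReal_one]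

theorem norm_cpow_sub_one_smul_le (hfg : ∀ t, 0 < t → ‖f t‖ ≤ g t) {t : ℝ} (ht : t ∈ Ioi 0) :
    ‖(t : ℂ) ^ (s - 1) • f t‖ ≤ t ^ (s.re - 1) * g t := by
  rw [norm_smul, norm_cpow_eq_rpow_re_of_pos ht, sub_re, one_re]
  gcongr
  · exact Real.rpow_nonneg (le_of_lt ht) _
  · exact hfg t ht

theorem integrableOn_rpow_mul_of_mellinConvergent {σ : ℝ}
    (hg : MellinConvergent (fun t => (g t : ℂ)) σ) :
    IntegrableOn (fun t => t ^ (σ - 1) * g t) (Ioi 0) := by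
  refine IntegrableOn.congr_fun (Integrable.re hg) (fun t ht => ?_) measurableSet_Ioi
  simp only [cpow_sub_one_smul_ofReal (le_of_lt ht), RCLike.re_to_complex, ofReal_re]

theorem mellinConvergent_of_norm_le (hf : AEStronglyMeasurable f (volume.restrict (Ioi 0)))
    (hfg : ∀ t, 0 < t → ‖f t‖ ≤ g t) (hg : MellinConvergent (fun t => (g t : ℂ)) s.re) :
    MellinConvergent f s := by
  refine (integrableOn_rpow_mul_of_mellinConvergent hg).mono' ?_
    (ae_restrict_of_forall_mem measurableSet_Ioi fun t => norm_cpow_sub_one_smul_le hfg)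
  exact (by fun_prop : Measurable fun t : ℝ => (t : ℂ) ^ (s - 1)).aestronglyMeasurable.smul hf

theorem norm_mellin_le_norm_mellin (hfg : ∀ t, 0 < t → ‖f t‖ ≤ g t)
    (hg : MellinConvergent (fun t => (g t : ℂ)) s.re) :
    ‖mellin f s‖ ≤ ‖mellin (fun t => (g t : ℂ)) s.re‖ := by
  have mellin_eq : mellin (fun t => (g t : ℂ)) s.re =
      ((∫ t in Ioi (0 : ℝ), t ^ (s.re - 1) * g t : ℝ) : ℂ) := by
    rw [← integral_complex_ofReal]
    exact setIntegral_congr_fun measurableSet_Ioi fun t ht =>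
      cpow_sub_one_smul_ofReal (le_of_lt ht) _
  rw [mellin_eq, norm_real]
  exact (norm_integral_le_of_norm_le (integrableOn_rpow_mul_of_mellinConvergent hg)
    (ae_restrict_of_forall_mem measurableSet_Ioi fun t => norm_cpow_sub_one_smul_le hfg)).trans
    (le_abs_self _)

theorem norm_mellin_sub_mellin_le {f₀ : ℝ → E}
    (hmeas : AEStronglyMeasurable (fun t => f t - f₀ t) (volume.restrict (Ioi 0)))
    (hf₀ : MellinConvergent f₀ s) (hfg : ∀ t, 0 < t → ‖f t - f₀ t‖ ≤ g t)
    (hg : MellinConvergent (fun t => (g t : ℂ)) s.re) :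
    ‖mellin f s - mellin f₀ s‖ ≤ ‖mellin (fun t => (g t : ℂ)) s.re‖ := by
  have hadd := (hasMellin_add (mellinConvergent_of_norm_le hmeas hfg hg) hf₀).2
  simp only [sub_add_cancel] at hadd
  rw [hadd, add_sub_cancel_right]
  exact norm_mellin_le_norm_mellin hfg hg

theorem mellinConvergent_inv_one_add_abs_pow {N : ℕ} (hs₀ : 0 < s.re) (hsN : s.re < N) :
    MellinConvergent (fun t : ℝ => (((1 + |t| ^ N)⁻¹ : ℝ) : ℂ)) s := by
  have hcont : Continuous fun t : ℝ => (((1 + |t| ^ N)⁻¹ : ℝ) : ℂ) :=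
    continuous_ofReal.comp <| Continuous.inv₀ (by fun_prop) fun t => by positivity
  refine mellinConvergent_of_isBigO_rpow (a := N) (b := 0)
    (hcont.locallyIntegrable.locallyIntegrableOn _) (.of_bound 1 ?_) hsN ?_ hs₀
  · filter_upwards [eventually_gt_atTop 0] with t ht
    rw [norm_real, Real.norm_of_nonneg (by positivity), abs_of_pos ht, one_mul,
      Real.norm_of_nonneg (by positivity), Real.rpow_neg ht.le, Real.rpow_natCast]
    gcongr
    linarith
  · simpa using! (hcont.tendsto 0).isBigO_one ℝ |>.mono nhdsWithin_le_nhds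

theorem tendsto_mellin_cexp_neg_mul_smul (hf : MellinConvergent f s) :
    Tendsto (fun ε : ℝ => mellin (fun t => cexp (-(ε * t)) • f t) s) (𝓝[>] 0)
      (𝓝 (mellin f s)) := by
  refine tendsto_integral_filter_of_dominated_convergence
    (fun t : ℝ => ‖(t : ℂ) ^ (s - 1) • f t‖) (.of_forall fun ε => ?_) ?_ hf.norm
    (.of_forall fun t => ?_)
  · simp_rw [smul_comm _ (cexp _)]
    exact (by fun_prop : Continuous fun t : ℝ => cexp (-(ε * t))).aestronglyMeasurable.smul
      hf.aestronglyMeasurable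
  · filter_upwards [self_mem_nhdsWithin] with ε (hε : 0 < ε)
    refine ae_restrict_of_forall_mem measurableSet_Ioi fun t (ht : 0 < t) => ?_
    rw [smul_comm, norm_smul, norm_exp]
    refine mul_le_of_le_one_left (norm_nonneg _) (Real.exp_le_one_iff.2 ?_)
    simpa using (mul_pos hε ht).le
  · have hcont : Continuous fun ε : ℝ => (t : ℂ) ^ (s - 1) • cexp (-(ε * t)) • f t := by fun_prop
    simpa using (hcont.tendsto 0).mono_left nhdsWithin_le_nhds

end Mellin

section Gamma

variable {a z : ℂ}

theorem mellinConvergent_cexp_neg_mul (ha : 0 < a.re) (hz : 0 < z.re) :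
    MellinConvergent (fun u : ℝ => cexp (-(z * u))) a := by
  have hcont : Continuous fun u : ℝ => cexp (-(z * u)) := by fun_prop
  refine mellinConvergent_of_isBigO_rpow_exp hz (b := 0)
    (hcont.locallyIntegrable.locallyIntegrableOn _) (.of_bound 1 (.of_forall fun u => ?_)) ?_ ha
  · simp [norm_exp]
  · simpa using! (hcont.tendsto 0).isBigO_one ℝ |>.mono nhdsWithin_le_nhds

theorem differentiableAt_mellin_cexp_neg_mul (ha : 0 < a.re) (hz : 0 < z.re) :
    DifferentiableAt ℂ (fun w : ℂ => mellin (fun u : ℝ => cexp (-(w * u))) a) z := by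
  have hmeas (w : ℂ) : Measurable fun u : ℝ => (u : ℂ) ^ (a - 1) • cexp (-(w * u)) := by fun_prop
  have hhalf : 0 < ((z.re / 2 : ℝ) : ℂ).re := by simpa using half_pos hz
  have hbound :
      MellinConvergent (fun u : ℝ => (u : ℂ) ^ (1 : ℂ) • cexp (-((z.re / 2 : ℝ) * u))) a :=
    MellinConvergent.cpow_smul.2
      (mellinConvergent_cexp_neg_mul (by rw [add_re, one_re]; positivity) hhalf)
  refine (hasDerivAt_integral_of_dominated_loc_of_deriv_le
    (F' := fun (w : ℂ) (u : ℝ) => (u : ℂ) ^ (a - 1) • (cexp (-(w * u)) * -(1 * u)))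
    (s := {w : ℂ | z.re / 2 < w.re})
    ((isOpen_lt continuous_const continuous_re).mem_nhds (half_lt_self hz))
    (.of_forall fun w => (hmeas w).aestronglyMeasurable) (mellinConvergent_cexp_neg_mul ha hz)
    (by fun_prop) (ae_restrict_of_forall_mem measurableSet_Ioi fun u (hu : 0 < u) w hw => ?_)
    hbound.norm (.of_forall fun u w _ => ?_)).2.differentiableAt
  · have : z.re / 2 * u ≤ w.re * u := mul_le_mul_of_nonneg_right (le_of_lt hw) hu.le
    simp only [norm_smul, norm_mul, norm_exp, cpow_one, norm_neg, one_mul, mul_comm ‖(u : ℂ)‖]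
    gcongr ?_ * (?_ * ?_)
    exact Real.exp_le_exp.2 (by simpa using this)
  · exact (((hasDerivAt_id w).mul_const (u : ℂ)).neg.cexp).const_smul ((u : ℂ) ^ (a - 1))

theorem mellin_cexp_neg_mul (ha : 0 < a.re) (hz : 0 < z.re) :
    mellin (fun u : ℝ => cexp (-(z * u))) a = Gamma a * z ^ (-a) := by
  have hU : IsOpen {w : ℂ | 0 < w.re} := isOpen_lt continuous_const continuous_re
  have hleft : AnalyticOnNhd ℂ (fun w : ℂ => mellin (fun u : ℝ => cexp (-(w * u))) a)
      {w | 0 < w.re} :=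
    DifferentiableOn.analyticOnNhd (fun w hw =>
      (differentiableAt_mellin_cexp_neg_mul ha hw).differentiableWithinAt) hU
  have hright : AnalyticOnNhd ℂ (fun w : ℂ => Gamma a * w ^ (-a)) {w | 0 < w.re} :=
    DifferentiableOn.analyticOnNhd (fun w hw =>
      ((differentiableAt_id.cpow_const (.inl hw)).const_mul _).differentiableWithinAt) hU
  have hreal : ∀ x : ℝ, 0 < x →
      mellin (fun u : ℝ => cexp (-((x : ℂ) * u))) a = Gamma a * (x : ℂ) ^ (-a) := fun x hx => by
    simp_rw [mellin, smul_eq_mul]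
    rw [integral_cpow_mul_exp_neg_mul_Ioi ha hx, one_div, cpow_neg, mul_comm,
      inv_cpow _ _ (by simp [arg_ofReal_of_nonneg hx.le, Real.pi_ne_zero.symm])]
  have htendsto : Tendsto ((↑) : ℝ → ℂ) (𝓝[≠] 1) (𝓝[≠] 1) := by
    simpa using! continuous_ofReal.continuousAt.continuousWithinAt.tendsto_nhdsWithin
      (fun x (hx : x ≠ 1) => show (x : ℂ) ≠ 1 by exact_mod_cast hx)
  refine hleft.eqOn_of_preconnected_of_frequently_eq hright
    (convex_halfSpace_re_gt 0).isPreconnected (z₀ := 1) (by simp) ?_ hz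
  refine htendsto.frequently (Eventually.frequently ?_)
  filter_upwards [nhdsWithin_le_nhds (lt_mem_nhds one_pos)] with x hx using hreal x hx

theorem norm_ofReal_sub_I_mul_cpow_neg_le (ha : 0 ≤ a.re) (ε : ℝ) {s : ℝ} (hs : s ≠ 0) :
    ‖((ε : ℂ) - I * s) ^ (-a)‖ ≤ Real.exp (Real.pi * |a.im|) * |s| ^ (-a.re) := by
  set w : ℂ := ε - I * s
  have hsw : |s| ≤ ‖w‖ := by simpa [w] using abs_im_le_norm w
  have hexp : arg w * a.im ≤ Real.pi * |a.im| :=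
    (le_abs_self _).trans <| (abs_mul _ _).trans_le <| by gcongr; exact abs_arg_le_pi w
  calc ‖w ^ (-a)‖ ≤ ‖w‖ ^ (-a).re / Real.exp (arg w * (-a).im) := norm_cpow_le _ _
    _ = Real.exp (arg w * a.im) * ‖w‖ ^ (-a.re) := by
      rw [neg_im, mul_neg, Real.exp_neg, div_inv_eq_mul, neg_re, mul_comm]
    _ ≤ Real.exp (Real.pi * |a.im|) * |s| ^ (-a.re) := by
      gcongr ?_ * ?_
      · exact Real.exp_le_exp.2 hexp
      · exact Real.rpow_le_rpow_of_nonpos (abs_pos.2 hs) hsw (neg_nonpos.2 ha)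

theorem tendsto_integral_sub_I_mul_cpow_neg_smul {g : ℝ → E} (ha : 0 ≤ a.re)
    (hg : AEStronglyMeasurable g) (hint : Integrable fun s => |s| ^ (-a.re) * ‖g s‖) :
    Tendsto (fun ε : ℝ => ∫ s : ℝ, ((ε : ℂ) - I * s) ^ (-a) • g s) (𝓝 0)
      (𝓝 (∫ s : ℝ, (-(I * s)) ^ (-a) • g s)) := by
  have hne : ∀ᵐ s : ℝ, s ≠ 0 := by simp [ae_iff]
  refine tendsto_integral_filter_of_dominated_convergence
    (fun s => Real.exp (Real.pi * |a.im|) * (|s| ^ (-a.re) * ‖g s‖)) (.of_forall fun ε => ?_)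
    (.of_forall fun ε => ?_) (hint.const_mul _) ?_
  · have hmeas : Measurable fun s : ℝ => ((ε : ℂ) - I * s) ^ (-a) := by fun_prop
    exact hmeas.aestronglyMeasurable.smul hg
  · filter_upwards [hne] with s hs
    rw [norm_smul, ← mul_assoc]
    gcongr
    exact norm_ofReal_sub_I_mul_cpow_neg_le ha ε hs
  · filter_upwards [hne] with s hs
    have hslit : ((0 : ℝ) : ℂ) - I * s ∈ slitPlane := .inr (by simpa using hs)
    have hcont : ContinuousAt (fun ε : ℝ => ((ε : ℂ) - I * s) ^ (-a)) 0 :=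
      ContinuousAt.cpow (by fun_prop) continuousAt_const hslit
    simpa using (hcont.tendsto.smul_const (g s))

theorem neg_I_mul_cpow_neg (ha : a ≠ 0) (s : ℝ) :
    (-(I * s)) ^ (-a) =
      ((|s| : ℝ) : ℂ) ^ (-a) * cexp (I * (Real.pi * (a / 2) * Real.sign s)) := by
  have hpolar {w : ℂ} (hw : w ≠ 0) (hs : s ≠ 0) :
      (((|s| : ℝ) : ℂ) * w) ^ (-a) = ((|s| : ℝ) : ℂ) ^ (-a) * cexp (log w * -a) := by
    have habs : ((|s| : ℝ) : ℂ) ≠ 0 := ofReal_ne_zero.2 (abs_ne_zero.2 hs)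
    rw [cpow_def_of_ne_zero (mul_ne_zero habs hw), cpow_def_of_ne_zero habs,
      log_ofReal_mul (abs_pos.2 hs) hw, ofReal_log (abs_nonneg s), add_mul, exp_add]
  rcases lt_trichotomy s 0 with hs | rfl | hs
  · rw [show -(I * s) = (|s| : ℝ) * I by rw [abs_of_neg hs]; push_cast; ring,
      hpolar I_ne_zero hs.ne, log_I, Real.sign_of_neg hs]
    push_cast
    ring_nf
  · simp [zero_cpow (neg_ne_zero.2 ha)]
  · rw [show -(I * s) = (|s| : ℝ) * -I by rw [abs_of_pos hs]; ring,
      hpolar (neg_ne_zero.2 I_ne_zero) hs.ne', log_neg_I, Real.sign_of_pos hs]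
    push_cast
    ring_nf

end Gamma

theorem integrable_abs_rpow_neg_mul_norm {F : Type*} [NormedAddCommGroup F] {g : ℝ → F} {α : ℝ}
    (hα : α < 1) (hg : Continuous g) (hc : HasCompactSupport g) :
    Integrable fun s : ℝ => |s| ^ (-α) * ‖g s‖ := by
  have hloc : LocallyIntegrable fun s : ℝ => |s| ^ (-α) :=
    locallyIntegrable_of_norm_le_rpow (C := 1) (α := α) (by simp) (by simpa using hα)
      (.of_forall fun s => by
        rw [Real.norm_of_nonneg (by positivity), one_mul, Real.norm_eq_abs])
      (by fun_prop : Measurable fun s : ℝ => |s| ^ (-α)).aestronglyMeasurable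
  exact hloc.integrable_smul_right_of_hasCompactSupport hg.norm hc.norm

/-- The Fourier transform with kernel `e^{its}`, i.e. without the `-2π` of Mathlib's `𝓕`. It gives
the inner integral of the phase `λ s rᵏ` at the frequency `t = λ rᵏ`. -/
noncomputable def oscillatoryTransform (g : ℝ → E) (t : ℝ) : E :=
  ∫ s : ℝ, cexp (I * ((t * s : ℝ) : ℂ)) • g s

section OscillatoryTransform

variable {g h : ℝ → E} {N : ℕ}

theorem oscillatoryTransform_eq_fourier (g : ℝ → E) (t : ℝ) :
    oscillatoryTransform g t = 𝓕 g (-t / (2 * Real.pi)) := by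
  rw [Real.fourier_real_eq_integral_exp_smul, oscillatoryTransform]
  congr with s
  congr 2
  push_cast
  field_simp

theorem norm_oscillatoryTransform_le (g : ℝ → E) (t : ℝ) :
    ‖oscillatoryTransform g t‖ ≤ ∫ s, ‖g s‖ :=
  (norm_integral_le_integral_norm _).trans_eq <| by
    simp_rw [norm_smul, norm_exp_I_mul_ofReal, one_mul]

theorem integrable_cexp_I_mul_smul (hg : Integrable g) (t : ℝ) :
    Integrable fun s : ℝ => cexp (I * ((t * s : ℝ) : ℂ)) • g s :=
  hg.bdd_smul 1 (by fun_prop) (.of_forall fun s => (norm_exp_I_mul_ofReal _).le)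

theorem oscillatoryTransform_sub (hg : Integrable g) (hh : Integrable h) (t : ℝ) :
    oscillatoryTransform (fun s => g s - h s) t =
      oscillatoryTransform g t - oscillatoryTransform h t := by
  simp_rw [oscillatoryTransform, smul_sub]
  exact integral_sub (integrable_cexp_I_mul_smul hg t) (integrable_cexp_I_mul_smul hh t)

theorem stronglyMeasurable_oscillatoryTransform {P : Type*} [MeasurableSpace P] {f : P → ℝ → E}
    {τ : P → ℝ} (hf : StronglyMeasurable (Function.uncurry f)) (hτ : Measurable τ) :
    StronglyMeasurable fun p => oscillatoryTransform (f p) (τ p) := by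
  have hexp : Measurable fun q : P × ℝ => cexp (I * ((τ q.1 * q.2 : ℝ) : ℂ)) := by fun_prop
  exact StronglyMeasurable.integral_prod_right (hexp.stronglyMeasurable.smul hf)

theorem hasCompactSupport_iteratedDeriv (hc : HasCompactSupport g) (n : ℕ) :
    HasCompactSupport (iteratedDeriv n g) := by
  induction n with
  | zero => rwa [iteratedDeriv_zero]
  | succ n ih => rw [iteratedDeriv_succ]; exact ih.deriv

theorem oscillatoryTransform_iteratedDeriv (hg : ContDiff ℝ N g) (hc : HasCompactSupport g)
    (t : ℝ) :
    oscillatoryTransform (iteratedDeriv N g) t = (-(I * t)) ^ N • oscillatoryTransform g t := by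
  have hint (n : ℕ) (hn : (n : ℕ∞) ≤ N) : Integrable (iteratedDeriv n g) :=
    (hg.continuous_iteratedDeriv n (by exact_mod_cast hn)).integrable_of_hasCompactSupport
      (hasCompactSupport_iteratedDeriv hc n)
  simp only [oscillatoryTransform_eq_fourier]
  rw [Real.fourier_iteratedDeriv (N := N) hg hint le_rfl]
  push_cast
  field_simp

theorem one_add_abs_pow_mul_norm_oscillatoryTransform_le (hg : ContDiff ℝ N g)
    (hc : HasCompactSupport g) (t : ℝ) :
    (1 + |t| ^ N) * ‖oscillatoryTransform g t‖ ≤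
      (∫ s, ‖g s‖) + ∫ s, ‖iteratedDeriv N g s‖ := by
  have hderiv := norm_oscillatoryTransform_le (iteratedDeriv N g) t
  rw [oscillatoryTransform_iteratedDeriv hg hc, norm_smul, norm_pow, norm_neg, norm_mul, norm_I,
    one_mul, norm_real, Real.norm_eq_abs] at hderiv
  rw [one_add_mul]
  exact add_le_add (norm_oscillatoryTransform_le g t) hderiv

theorem mellinConvergent_oscillatoryTransform {a : ℂ} (hg : ContDiff ℝ N g)
    (hc : HasCompactSupport g) (ha₀ : 0 < a.re) (haN : a.re < N) :
    MellinConvergent (oscillatoryTransform g) a := by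
  set C := (∫ s, ‖g s‖) + ∫ s, ‖iteratedDeriv N g s‖
  refine mellinConvergent_of_norm_le (g := fun t => C * (1 + |t| ^ N)⁻¹) ?_ (fun t _ => ?_) ?_
  · exact (stronglyMeasurable_oscillatoryTransform (f := fun _ => g)
      (hg.continuous.stronglyMeasurable.comp_snd) measurable_id).aestronglyMeasurable
  · rw [← div_eq_mul_inv, le_div_iff₀' (by positivity)]
    exact one_add_abs_pow_mul_norm_oscillatoryTransform_le hg hc t
  · simpa using (mellinConvergent_inv_one_add_abs_pow (s := a.re) ha₀ haN).const_smul (C : ℂ)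

theorem mellin_cexp_neg_mul_smul_oscillatoryTransform [CompleteSpace E] {a : ℂ} {ε : ℝ}
    (ha : 0 < a.re) (hε : 0 < ε) (hg : Integrable g) :
    mellin (fun u : ℝ => cexp (-(ε * u)) • oscillatoryTransform g u) a =
      Gamma a • ∫ s : ℝ, ((ε : ℂ) - I * s) ^ (-a) • g s := by
  let K (u s : ℝ) : ℂ := (u : ℂ) ^ (a - 1) • cexp (-((ε - I * s) * u))
  have hK (u s : ℝ) :
      K u s = (u : ℂ) ^ (a - 1) • cexp (-(ε * u)) • cexp (I * ((u * s : ℝ) : ℂ)) := by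
    simp only [K, smul_eq_mul, ← exp_add]
    congr 2
    push_cast
    ring
  have hKnorm (u s : ℝ) : ‖K u s‖ = ‖(u : ℂ) ^ (a - 1) • cexp (-(ε * u))‖ := by
    rw [hK, norm_smul, norm_smul, norm_smul, norm_exp_I_mul_ofReal, mul_one]
  have hKg : Integrable (Function.uncurry fun u s => K u s • g s)
      ((volume.restrict (Ioi 0)).prod volume) := by
    have hdom := (mellinConvergent_cexp_neg_mul ha (z := ε) (by simpa using hε)).norm.mul_prod
      hg.norm
    refine hdom.mono' ?_ (.of_forall fun p => ?_)
    · have hmeas : Measurable fun p : ℝ × ℝ => K p.1 p.2 := by fun_prop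
      exact hmeas.aestronglyMeasurable.smul hg.1.comp_snd
    · simp only [Function.uncurry, norm_smul (K _ _), hKnorm, le_refl]
  calc mellin (fun u : ℝ => cexp (-(ε * u)) • oscillatoryTransform g u) a
      = ∫ u in Ioi (0 : ℝ), ∫ s : ℝ, K u s • g s := by
        simp_rw [mellin, oscillatoryTransform, ← integral_smul, hK, smul_assoc]
    _ = ∫ s : ℝ, ∫ u in Ioi (0 : ℝ), K u s • g s := integral_integral_swap hKg
    _ = ∫ s : ℝ, Gamma a • ((ε : ℂ) - I * s) ^ (-a) • g s := by
        congr with s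
        rw [integral_smul_const, smul_smul, ← mellin_cexp_neg_mul ha (by simpa using hε), mellin]
    _ = Gamma a • ∫ s : ℝ, ((ε : ℂ) - I * s) ^ (-a) • g s := integral_smul _ _

theorem mellin_oscillatoryTransform [CompleteSpace E] {a : ℂ} (hg : ContDiff ℝ 1 g)
    (hc : HasCompactSupport g) (ha₀ : 0 < a.re) (ha₁ : a.re < 1) :
    mellin (oscillatoryTransform g) a = Gamma a • ∫ s : ℝ, (-(I * s)) ^ (-a) • g s := by
  refine tendsto_nhds_unique (tendsto_mellin_cexp_neg_mul_smul
    (mellinConvergent_oscillatoryTransform (N := 1) hg hc ha₀ (by simpa using ha₁))) ?_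
  have hlim := ((tendsto_integral_sub_I_mul_cpow_neg_smul ha₀.le hg.continuous.aestronglyMeasurable
    (integrable_abs_rpow_neg_mul_norm ha₁ hg.continuous hc)).mono_left
      (nhdsWithin_le_nhds (s := Ioi 0))).const_smul (Gamma a)
  refine hlim.congr' ?_
  filter_upwards [self_mem_nhdsWithin] with ε hε
  exact (mellin_cexp_neg_mul_smul_oscillatoryTransform ha₀ hε
    (hg.continuous.integrable_of_hasCompactSupport hc)).symm

end OscillatoryTransform

section Slice

variable {P F : Type*} [NormedAddCommGroup P] [NormedAddCommGroup F] {f : ℝ × P → F}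

theorem hasCompactSupport_slice (hc : HasCompactSupport f) (p : P) :
    HasCompactSupport fun s => f (s, p) :=
  .intro (hc.isCompact.image continuous_fst) fun s hs =>
    image_eq_zero_of_notMem_tsupport fun h => hs ⟨(s, p), h, rfl⟩

variable [NormedSpace ℝ P] [NormedSpace ℝ F]

theorem contDiff_slice (hf : ContDiff ℝ ∞ f) (n : ℕ) (p : P) : ContDiff ℝ n fun s => f (s, p) :=
  contDiff_infty.1 (hf.comp (contDiff_prodMk_left p)) n

theorem exists_iteratedDeriv_slice_eq (hf : ContDiff ℝ ∞ f) (hc : HasCompactSupport f) (n : ℕ) :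
    ∃ f' : ℝ × P → F, ContDiff ℝ ∞ f' ∧ HasCompactSupport f' ∧
      ∀ p, iteratedDeriv n (fun s => f (s, p)) = fun s => f' (s, p) := by
  induction n with
  | zero => exact ⟨f, hf, hc, fun p => iteratedDeriv_zero⟩
  | succ n ih =>
    obtain ⟨f', hf', hc', heq⟩ := ih
    refine ⟨fun q => fderiv ℝ f' q (1, 0),
      (hf'.fderiv_right (m := ∞) (by simp)).clm_apply contDiff_const, hc'.fderiv_apply ℝ _,
      fun p => funext fun s => ?_⟩
    rw [iteratedDeriv_succ, heq p]
    exact ((hf'.differentiable (by simp) (s, p)).hasFDerivAt.comp_hasDerivAt s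
      ((hasDerivAt_id s).prodMk (hasDerivAt_const s p))).deriv

theorem exists_integral_norm_slice_sub_le (hf : ContDiff ℝ 1 f) (hc : HasCompactSupport f) :
    ∃ C, ∀ p q, ∫ s, ‖f (s, p) - f (s, q)‖ ≤ C * ‖p - q‖ := by
  obtain ⟨L, hL⟩ := hf.lipschitzWith_of_hasCompactSupport hc one_ne_zero
  have hK : IsCompact (Prod.fst '' tsupport f) := hc.isCompact.image continuous_fst
  refine ⟨L * volume.real (Prod.fst '' tsupport f), fun p q => ?_⟩
  have hzero (s : ℝ) (hs : s ∉ Prod.fst '' tsupport f) (p : P) : f (s, p) = 0 :=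
    image_eq_zero_of_notMem_tsupport fun h => hs ⟨(s, p), h, rfl⟩
  have hlip (s : ℝ) : ‖‖f (s, p) - f (s, q)‖‖ ≤ L * ‖p - q‖ := by
    simpa [Prod.norm_def] using hL.norm_sub_le (s, p) (s, q)
  rw [← setIntegral_eq_integral_of_forall_compl_eq_zero fun s hs => by simp [hzero s hs],
    mul_right_comm]
  exact (le_abs_self _).trans
    (norm_setIntegral_le_of_norm_le_const hK.measure_lt_top fun s _ => hlip s)

end Slice

theorem exists_norm_oscillatoryTransform_slice_sub_le {P : Type*} [NormedAddCommGroup P]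
    [NormedSpace ℝ P] {f : ℝ × P → E} (hf : ContDiff ℝ ∞ f) (hc : HasCompactSupport f) (N : ℕ) :
    ∃ C, ∀ p q t, ‖oscillatoryTransform (fun s => f (s, p)) t -
      oscillatoryTransform (fun s => f (s, q)) t‖ ≤ C * (‖p - q‖ * (1 + |t| ^ N)⁻¹) := by
  obtain ⟨f', hf', hc', hderiv⟩ := exists_iteratedDeriv_slice_eq hf hc N
  obtain ⟨C₀, hC₀⟩ := exists_integral_norm_slice_sub_le (contDiff_infty.1 hf 1) hc
  obtain ⟨C₁, hC₁⟩ := exists_integral_norm_slice_sub_le (contDiff_infty.1 hf' 1) hc'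
  refine ⟨C₀ + C₁, fun p q t => ?_⟩
  have hslice := contDiff_slice hf N
  have hint (p : P) : Integrable fun s => f (s, p) :=
    (hslice p).continuous.integrable_of_hasCompactSupport (hasCompactSupport_slice hc p)
  have hsub : iteratedDeriv N (fun s => f (s, p) - f (s, q)) = fun s => f' (s, p) - f' (s, q) := by
    ext s
    rw [iteratedDeriv_fun_sub (hslice p).contDiffAt (hslice q).contDiffAt, hderiv, hderiv]
  have hdecay := one_add_abs_pow_mul_norm_oscillatoryTransform_le ((hslice p).sub (hslice q))
    ((hasCompactSupport_slice hc p).sub (hasCompactSupport_slice hc q)) t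
  rw [← oscillatoryTransform_sub (hint p) (hint q), ← mul_assoc, ← div_eq_mul_inv,
    le_div_iff₀' (by positivity), add_mul C₀]
  rw [hsub] at hdecay
  exact hdecay.trans (add_le_add (hC₀ p q) (hC₁ p q))

section Model

variable {f : ℝ × ℝ → E} {κ : ℝ} {a : ℂ}

theorem exists_norm_mellin_mul_inv_one_add_abs_pow_le {N : ℕ} (ha : -1 < a.re) (hκ : 0 < κ)
    (haN : (a.re + 1) / κ < N) :
    ∃ C, ∀ lam : ℝ, 0 < lam →
      MellinConvergent (fun r : ℝ => ((r * (1 + |lam * r ^ κ| ^ N)⁻¹ : ℝ) : ℂ)) a ∧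
      ‖mellin (fun r : ℝ => ((r * (1 + |lam * r ^ κ| ^ N)⁻¹ : ℝ) : ℂ)) a‖ ≤
        C * lam ^ (-((a.re + 1) / κ)) := by
  let w (t : ℝ) : ℂ := ((1 + |t| ^ N)⁻¹ : ℝ)
  have hre : ((a + 1) / κ).re = (a.re + 1) / κ := by rw [div_ofReal_re, add_re, one_re]
  have hshift (lam : ℝ) : (fun r : ℝ => ((r * (1 + |lam * r ^ κ| ^ N)⁻¹ : ℝ) : ℂ)) =
      fun r : ℝ => (r : ℂ) ^ (1 : ℂ) • w (lam * r ^ κ) := by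
    ext r
    rw [cpow_one, smul_eq_mul, ofReal_mul]
  refine ⟨κ⁻¹ * ‖mellin w ((a + 1) / κ)‖, fun lam hlam => ?_⟩
  rw [hshift, MellinConvergent.cpow_smul, mellinConvergent_comp_mul_rpow_iff hκ.ne' hlam,
    mellin_cpow_smul, mellin_comp_mul_rpow _ _ _ hlam]
  refine ⟨mellinConvergent_inv_one_add_abs_pow ?_ (hre ▸ haN), le_of_eq ?_⟩
  · exact hre ▸ div_pos (by linarith) hκ
  · rw [norm_smul, norm_smul, norm_cpow_eq_rpow_re_of_pos hlam, neg_re, hre, norm_inv,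
      Real.norm_eq_abs, abs_abs, abs_of_pos hκ]
    ring

theorem exists_norm_mellin_oscillatoryTransform_slice_sub_le (hf : ContDiff ℝ ∞ f)
    (hc : HasCompactSupport f) (ha : 0 < a.re) (hκ : 0 < κ) :
    ∃ C, ∀ lam : ℝ, 0 < lam →
      ‖mellin (fun r => oscillatoryTransform (fun s => f (s, r)) (lam * r ^ κ)) a -
        mellin (fun r => oscillatoryTransform (fun s => f (s, 0)) (lam * r ^ κ)) a‖ ≤
      C * lam ^ (-((a.re + 1) / κ)) := by
  obtain ⟨N, hN⟩ := exists_nat_gt ((a.re + 1) / κ)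
  obtain ⟨C₀, hC₀⟩ := exists_norm_oscillatoryTransform_slice_sub_le hf hc N
  obtain ⟨C₁, hC₁⟩ := exists_norm_mellin_mul_inv_one_add_abs_pow_le (a := a.re)
    (by rw [ofReal_re]; linarith) hκ hN
  refine ⟨‖(C₀ : ℂ)‖ * C₁, fun lam hlam => ?_⟩
  obtain ⟨hconv, hdecay⟩ := hC₁ lam hlam
  have hmeas (u : ℝ → ℝ → E) (hu : Continuous (Function.uncurry u)) :
      StronglyMeasurable fun r => oscillatoryTransform (u r) (lam * r ^ κ) :=
    stronglyMeasurable_oscillatoryTransform hu.stronglyMeasurable (by fun_prop)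
  let d (r : ℝ) := C₀ * (r * (1 + |lam * r ^ κ| ^ N)⁻¹)
  have hd : (fun r => (d r : ℂ)) =
      fun r => (C₀ : ℂ) • ((r * (1 + |lam * r ^ κ| ^ N)⁻¹ : ℝ) : ℂ) := by
    ext r
    rw [ofReal_mul, smul_eq_mul]
  have hle := norm_mellin_sub_mellin_le (g := d)
    (hmeas (fun r s => f (s, r)) (by fun_prop) |>.sub
      (hmeas (fun _ s => f (s, 0)) (by fun_prop))).aestronglyMeasurable
    ?_ (fun r hr => ?_) (hd ▸ hconv.const_smul (C₀ : ℂ))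
  · rw [hd, mellin_const_smul, norm_smul] at hle
    rw [mul_assoc]
    exact hle.trans (by gcongr; exact hdecay)
  · refine (mellinConvergent_comp_mul_rpow_iff hκ.ne' hlam).2
      (mellinConvergent_oscillatoryTransform (contDiff_slice hf N 0)
        (hasCompactSupport_slice hc 0) ?_ ?_)
    · rw [div_ofReal_re]; positivity
    · rw [div_ofReal_re]; exact lt_of_le_of_lt (by gcongr; linarith) hN
  · simpa only [sub_zero, Real.norm_of_nonneg hr.le] using hC₀ r 0 (lam * r ^ κ)

theorem mellin_oscillatoryTransform_comp_mul_rpow [CompleteSpace E] {g : ℝ → E} {m lam : ℝ}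
    (hg : ContDiff ℝ 1 g) (hc : HasCompactSupport g) (hm : 0 < m) (hmκ : m < κ) (hlam : 0 < lam) :
    mellin (fun r => oscillatoryTransform g (lam * r ^ κ)) m =
      ((lam ^ (-(m / κ)) : ℝ) : ℂ) • ((Real.Gamma (m / κ) / κ : ℝ) : ℂ) •
        ∫ s : ℝ, (((|s| ^ (-(m / κ)) : ℝ) : ℂ) *
          cexp (I * ((Real.pi * (m / κ / 2) * Real.sign s : ℝ) : ℂ))) • g s := by
  have hκ : 0 < κ := hm.trans hmκ
  have hkernel (s : ℝ) : (-(I * s)) ^ (-((m / κ : ℝ) : ℂ)) = ((|s| ^ (-(m / κ)) : ℝ) : ℂ) *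
      cexp (I * ((Real.pi * (m / κ / 2) * Real.sign s : ℝ) : ℂ)) := by
    rw [neg_I_mul_cpow_neg (ofReal_ne_zero.2 (by positivity)), ofReal_cpow (abs_nonneg s)]
    push_cast
    rfl
  rw [mellin_comp_mul_rpow _ _ _ hlam, ← ofReal_div, mellin_oscillatoryTransform hg hc
    (by rw [ofReal_re]; positivity) (by rwa [ofReal_re, div_lt_one hκ])]
  simp_rw [hkernel, abs_of_pos hκ, Gamma_ofReal, ofReal_cpow hlam.le, ofReal_neg, ofReal_div]
  rw [smul_comm, ← Complex.coe_smul, smul_smul ((κ⁻¹ : ℝ) : ℂ), ofReal_inv, inv_mul_eq_div]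

theorem setIntegral_integral_cexp_smul_eq_mellin {a : ℝ → ℝ → E} {m : ℝ}
    (ha : ∀ s r, 0 < r → a s r = ((r ^ (m - 1) : ℝ) : ℂ) • f (s, r)) (κ lam : ℝ) :
    ∫ r in Ioi (0 : ℝ), ∫ s : ℝ, cexp (I * ((lam * s * r ^ κ : ℝ) : ℂ)) • a s r =
      mellin (fun r => oscillatoryTransform (fun s => f (s, r)) (lam * r ^ κ)) m := by
  refine setIntegral_congr_fun measurableSet_Ioi fun r (hr : 0 < r) => ?_
  simp only [oscillatoryTransform]
  rw [← ofReal_one, ← ofReal_sub, ← ofReal_cpow hr.le, ← integral_smul]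
  congr with s
  rw [ha s r hr, smul_comm, mul_right_comm lam s]

end Model

theorem stmt_2_general [CompleteSpace E] (k n : ℝ) (hn : 0 < n) (hkn : 2 * n < k)
    (A : ℝ × ℝ → E) (hA : ContDiff ℝ ∞ A) (hcA : HasCompactSupport A) (a : ℝ → ℝ → E)
    (hdef : ∀ s r, 0 < r → a s r = ((r ^ (2 * n - 1) : ℝ) : ℂ) • A (s, r)) :
    ∃ C : ℝ, ∀ lam : ℝ, 0 < lam →
      ‖(∫ r in Ioi (0 : ℝ), ∫ s : ℝ, cexp (I * ((lam * s * r ^ k : ℝ) : ℂ)) • a s r) -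
        ((lam ^ (-(2 * n / k)) : ℝ) : ℂ) • ((Real.Gamma (2 * n / k) / k : ℝ) : ℂ) •
          ∫ s : ℝ, (((|s| ^ (-(2 * n / k)) : ℝ) : ℂ) *
            cexp (I * ((Real.pi * (n / k) * Real.sign s : ℝ) : ℂ))) • A (s, 0)‖ ≤
      C * lam ^ (-((2 * n + 1) / k)) := by
  have h2n : 0 < 2 * n := by positivity
  obtain ⟨C, hC⟩ := exists_norm_mellin_oscillatoryTransform_slice_sub_le hA hcA
    (a := (2 * n : ℝ)) h2n (h2n.trans hkn)
  refine ⟨C, fun lam hlam => ?_⟩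
  have hmain := mellin_oscillatoryTransform_comp_mul_rpow (contDiff_slice hA 1 0)
    (hasCompactSupport_slice hcA 0) h2n hkn hlam
  rw [show 2 * n / k / 2 = n / k by ring] at hmain
  rw [setIntegral_integral_cexp_smul_eq_mellin hdef, ← hmain]
  exact hC lam hlam

end

/-- For `k > 2n` and `Ã` smooth compactly supported on `ℝ²`, with
`a(s,r) = r^{2n−1} Ã(s,r)`,
`∫₀^∞ ∫_ℝ e^{iλ s rᵏ} a(s,r) ds dr
  = λ^{−2n/k} (Γ(2n/k)/k) ∫_ℝ |s|^{−2n/k} e^{iπ(n/k) sign s} Ã(s,0) ds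
    + O(λ^{−(2n+1)/k})` as `λ → +∞`. -/
theorem stmt_2 (k n : ℕ) (hk : 0 < k) (hn : 0 < n) (hkn : 2 * n < k)
    (A : ℝ × ℝ → ℂ) (hA : ContDiff ℝ (⊤ : ℕ∞) A) (hcA : HasCompactSupport A)
    (a : ℝ → ℝ → ℂ) (hdef : ∀ s r : ℝ, a s r = (r : ℂ) ^ (2 * n - 1) * A (s, r)) :
    ∃ C Λ : ℝ, ∀ lam : ℝ, Λ ≤ lam →
      ‖(∫ r in Set.Ioi (0:ℝ), ∫ s : ℝ,
            Complex.exp (Complex.I * ((lam * s * r ^ k : ℝ) : ℂ)) * a s r)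
        - ((lam ^ (-((2 * n : ℝ) / (k : ℝ))) : ℝ) : ℂ) *
            (((Real.Gamma ((2 * n : ℝ) / (k : ℝ)) / (k : ℝ) : ℝ) : ℂ) *
              ∫ s : ℝ,
                ((|s| ^ (-((2 * n : ℝ) / (k : ℝ))) : ℝ) : ℂ) *
                  Complex.exp (Complex.I *
                    ((Real.pi * ((n : ℝ) / (k : ℝ)) * Real.sign s : ℝ) : ℂ)) *
                  A (s, 0))‖
      ≤ C * lam ^ (-((2 * (n : ℝ) + 1) / (k : ℝ))) := by
  obtain ⟨C, hC⟩ := stmt_2_general k n (by positivity) (by exact_mod_cast hkn) A hA hcA a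
    fun s r _ => by
      rw [hdef, smul_eq_mul, ← Complex.ofReal_pow, ← Real.rpow_natCast,
        Nat.cast_pred (by positivity), Nat.cast_mul, Nat.cast_two]
  exact ⟨C, 1, fun lam hlam => by simpa only [Real.rpow_natCast] using! hC lam (by linarith)⟩
end
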